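/- For every n ≥ 4 and every k ≥ 1 there exists a U-cycle for the set of non-injective words of length n over a k-letter alphabet, i.e., the set of functions from Fin n to Fin k that are not injective (n-letter words with at least one repeated letter). -/

import Mathlib

/-- A U-cycle for a finite set `S` of `n`-letter words over the alphabet `Fin k`. -/
def IsUCycle {n k : ℕ} (S : Finset (Fin n → Fin k)) (s : ZMod S.card → Fin k) : Prop :=
  Set.BijOn (fun i : ZMod S.card => fun j : Fin n => s (i + ((j : ℕ) : ZMod S.card)))
    Set.univ ↑S

/-!
A U-cycle for `S` is the same as a permutation `σ` of `S` with a single cycle such that the first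
`n - 1` letters of `σ w` are the last `n - 1` letters of `w`. If `S` is closed under rotation,
rotation has all these properties, except that it may have several cycles. When two words differ
only in their first letter, exchanging their images keeps the overlaps, and merges their cycles if
these are distinct. So choose `σ` with cycles that cannot be enlarged in this way: words that differ
only in their first letter then lie in one cycle. In particular the preimage under `σ` of the
rotation of `w` lies in the cycle of `w`, so each word shares its cycle with its rotations, and
hence with every word of `S` that differs from it in one letter, wherever that letter is.

For the non-injective words it remains to link any two of them by changing one letter at a time.
Two equal letters allow all the others to be overwritten, which leads to a constant word, and
with three positions any constant word can be turned into any other.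
-/

section Permutations

open Equiv Equiv.Perm

variable {E : Type*} {σ τ : Perm E}

theorem sameCycle_of_forall_sameCycle_apply (h : ∀ x, τ.SameCycle x (σ x)) {x y : E}
    (hxy : σ.SameCycle x y) : τ.SameCycle x y := by
  obtain ⟨i, rfl⟩ := hxy
  induction i with
  | zero => exact .rfl
  | succ i ih =>
    rw [add_comm, zpow_one_add, mul_apply]
    exact ih.trans (h _)
  | pred i ih =>
    refine ih.trans ?_
    rw [← sub_add_cancel (-i : ℤ) 1, add_comm, zpow_one_add, mul_apply, add_sub_cancel_left]
    exact (h _).symm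

variable [Finite E]

theorem sameCycle_mul_swap_of_not_sameCycle [DecidableEq E] {e f : E} (h : ¬ σ.SameCycle e f) :
    (σ * swap e f).SameCycle e f := by
  set τ := σ * swap e f
  have hτf : τ f = σ e := by simp [τ]
  have walk (i : ℕ) : τ.SameCycle f ((σ ^ (i + 1)) e) := by
    induction i with
    | zero => exact ⟨1, hτf⟩
    | succ i ih =>
      rw [pow_succ', mul_apply]
      by_cases he : (σ ^ (i + 1)) e = e
      · exact ⟨1, by simpa [he] using hτf⟩
      · have hf : (σ ^ (i + 1)) e ≠ f := fun hf => h ⟨(i + 1 : ℕ), by rwa [zpow_natCast]⟩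
        have hτ : τ ((σ ^ (i + 1)) e) = σ ((σ ^ (i + 1)) e) := by
          simp only [τ, mul_apply, swap_apply_of_ne_of_ne he hf]
        exact hτ ▸ sameCycle_apply_right.2 ih
  have return_to_e := walk (orderOf σ - 1)
  rw [Nat.sub_add_cancel (orderOf_pos σ), pow_orderOf_eq_one, one_apply] at return_to_e
  exact return_to_e.symm

theorem sameCycle_le_sameCycle_mul_swap [DecidableEq E] {e f : E} (h : ¬ σ.SameCycle e f) :
    σ.SameCycle ≤ (σ * swap e f).SameCycle := by
  have hef := sameCycle_mul_swap_of_not_sameCycle h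
  refine fun x y => sameCycle_of_forall_sameCycle_apply fun x => ?_
  rcases eq_or_ne x e with rfl | hxe
  · exact hef.trans ⟨1, by simp⟩
  rcases eq_or_ne x f with rfl | hxf
  · exact hef.symm.trans ⟨1, by simp⟩
  · exact ⟨1, by simp [swap_apply_of_ne_of_ne hxe hxf]⟩

theorem exists_perm_le_sameCycle_of_mul_swap [DecidableEq E] {Q : Perm E → Prop} {R : E → E → Prop}
    (hQ : ∃ σ, Q σ) (hswap : ∀ σ e f, Q σ → R e f → Q (σ * swap e f)) :
    ∃ σ, Q σ ∧ R ≤ σ.SameCycle := by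
  obtain ⟨σ, hσ, hmax⟩ := (Set.toFinite {σ | Q σ}).exists_maximalFor SameCycle _ hQ
  refine ⟨σ, hσ, fun e f hR => ?_⟩
  by_contra hef
  exact hef <| hmax (hswap σ e f hσ hR) (sameCycle_le_sameCycle_mul_swap hef) e f
    (sameCycle_mul_swap_of_not_sameCycle hef)

theorem exists_zmod_equiv_apply_add_one [Nonempty E] (hσ : ∀ x y, σ.SameCycle x y) :
    ∃ e : ZMod (Nat.card E) ≃ E, ∀ i, e (i + 1) = σ (e i) := by
  have : Fintype E := Fintype.ofFinite E
  let x₀ : E := Classical.arbitrary E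
  have hcycle : σ.IsCycleOn (Finset.univ : Finset E) :=
    ⟨by simp, fun x _ y _ => hσ x y⟩
  have hpow : σ ^ Nat.card E = 1 := by
    ext x
    rw [Nat.card_eq_fintype_card, one_apply]
    exact hcycle.pow_card_apply (Finset.mem_univ x)
  let e (i : ZMod (Nat.card E)) : E := (σ ^ i.val) x₀
  have he (t : ℕ) : e t = (σ ^ t) x₀ := by
    simp only [e, ZMod.val_natCast, ← pow_eq_pow_mod t hpow]
  have hsurj : Function.Surjective e := fun x => by
    obtain ⟨t, ht⟩ := (hσ x₀ x).exists_nat_pow_eq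
    exact ⟨t, (he t).trans ht⟩
  have hbij : Function.Bijective e :=
    (Nat.bijective_iff_surjective_and_card e).2 ⟨hsurj, Nat.card_zmod _⟩
  refine ⟨.ofBijective e hbij, fun i => ?_⟩
  obtain ⟨t, rfl⟩ := ZMod.natCast_zmod_surjective i
  simp only [ofBijective_apply]
  rw [← Nat.cast_add_one, he, he, pow_succ', mul_apply]

end Permutations

section LetterChanges

variable {ι α : Type*}

/-- Two words of `S` that differ in at most one letter. -/
def LetterChange (S : Set (ι → α)) (v w : S) : Prop :=
  ∃ j, Set.EqOn v.1 w.1 {j}ᶜ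

/-- Any two words of `S` are linked by changing one letter at a time without leaving `S`. -/
def LetterConnected (S : Set (ι → α)) : Prop :=
  ∀ v w : S, Relation.EqvGen (LetterChange S) v w

theorem letterChange_update [DecidableEq ι] {S : Set (ι → α)} {w : ι → α} {j : ι} {x : α}
    (hw : w ∈ S) (hwj : Function.update w j x ∈ S) :
    LetterChange S ⟨w, hw⟩ ⟨Function.update w j x, hwj⟩ :=
  ⟨j, fun _ hi => (Function.update_of_ne hi x w).symm⟩

/-- The words with at least one repeated letter; the positions of the letters are indexed by
`ι`. -/
def nonInjectiveWords (ι α : Type*) : Set (ι → α) :=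
  {w | ¬ Function.Injective w}

theorem mem_nonInjectiveWords_of_apply_eq {w : ι → α} {a b : ι} {x : α} (hab : a ≠ b)
    (ha : w a = x) (hb : w b = x) : w ∈ nonInjectiveWords ι α :=
  fun hw => hab (hw (ha.trans hb.symm))

theorem eqvGen_letterChange_const [Finite ι] {w : ι → α} {a b : ι} {x : α} (hab : a ≠ b)
    (ha : w a = x) (hb : w b = x) :
    Relation.EqvGen (LetterChange (nonInjectiveWords ι α))
      ⟨w, mem_nonInjectiveWords_of_apply_eq hab ha hb⟩
      ⟨fun _ => x, mem_nonInjectiveWords_of_apply_eq hab rfl rfl⟩ := by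
  classical
  have : Fintype ι := Fintype.ofFinite ι
  have hmem (T : Finset ι) : T.piecewise (fun _ => x) w ∈ nonInjectiveWords ι α :=
    mem_nonInjectiveWords_of_apply_eq (x := x) hab (by simp [Finset.piecewise, ha])
      (by simp [Finset.piecewise, hb])
  have overwrite (T : Finset ι) : Relation.EqvGen (LetterChange (nonInjectiveWords ι α))
      ⟨w, mem_nonInjectiveWords_of_apply_eq hab ha hb⟩
      ⟨T.piecewise (fun _ => x) w, hmem T⟩ := by
    induction T using Finset.induction_on with
    | empty => simpa only [Finset.piecewise_empty] using .refl _
    | insert j T _ ih =>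
      have hjT := hmem (insert j T)
      simp only [Finset.piecewise_insert] at hjT ⊢
      exact ih.trans _ _ _ (.rel _ _ (letterChange_update (hmem T) hjT))
  simpa only [Finset.piecewise_univ] using overwrite Finset.univ

theorem letterConnected_nonInjectiveWords [Fintype ι] (hι : 2 < Fintype.card ι) :
    LetterConnected (nonInjectiveWords ι α) := by
  classical
  obtain ⟨a, b, c, hab, hac, hbc⟩ := Fintype.two_lt_card_iff.1 hι
  -- `u` still repeats `x`, at `b` and `c`, while `v` already repeats `y`, at `a` and `b`.
  have hconst (x y : α) : Relation.EqvGen (LetterChange (nonInjectiveWords ι α))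
      ⟨fun _ => x, mem_nonInjectiveWords_of_apply_eq hab rfl rfl⟩
      ⟨fun _ => y, mem_nonInjectiveWords_of_apply_eq hab rfl rfl⟩ := by
    let u : ι → α := Function.update (fun _ => x) a y
    let v : ι → α := Function.update u b y
    have hub : u b = x := by simp [u, hab.symm]
    have huc : u c = x := by simp [u, hac.symm]
    have hva : v a = y := by simp [u, v, hab]
    have hvb : v b = y := by simp [v]
    have huv := letterChange_update (mem_nonInjectiveWords_of_apply_eq hbc hub huc)
      (mem_nonInjectiveWords_of_apply_eq hab hva hvb)
    exact ((eqvGen_letterChange_const hbc hub huc).symm _ _).trans _ _ _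
      (.trans _ _ _ (.rel _ _ huv) (eqvGen_letterChange_const hab hva hvb))
  rintro ⟨v, hv⟩ ⟨w, hw⟩
  obtain ⟨i, j, hvij, hij⟩ := Function.not_injective_iff.1 hv
  obtain ⟨p, q, hwpq, hpq⟩ := Function.not_injective_iff.1 hw
  exact (eqvGen_letterChange_const hij hvij rfl).trans _ _ _
    ((hconst _ _).trans _ _ _ ((eqvGen_letterChange_const hpq hwpq rfl).symm _ _))

end LetterChanges

section Words

open Equiv Equiv.Perm

variable {n : ℕ} {α : Type*}

/-- The cyclic rotation of nonempty words that moves the first letter to the end. -/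
def rotateWord : Perm (Fin (n + 1) → α) :=
  (Equiv.addRight (1 : Fin (n + 1))).symm.arrowCongr (Equiv.refl α)

theorem rotateWord_apply (w : Fin (n + 1) → α) (i : Fin (n + 1)) :
    rotateWord w i = w (i + 1) := rfl

theorem init_rotateWord (w : Fin (n + 1) → α) : Fin.init (rotateWord w) = Fin.tail w := by
  ext i
  rw [Fin.init, rotateWord_apply, Fin.coeSucc_eq_succ, Fin.tail]

theorem injective_rotateWord_iff {w : Fin (n + 1) → α} :
    Function.Injective (rotateWord w) ↔ Function.Injective w :=
  (Equiv.addRight (1 : Fin (n + 1))).injective_comp w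

theorem tail_eq_of_eqOn_compl_zero {v w : Fin (n + 1) → α} (h : Set.EqOn v w {0}ᶜ) :
    Fin.tail v = Fin.tail w :=
  funext fun i => h (Fin.succ_ne_zero i)

theorem eqOn_rotateWord {v w : Fin (n + 1) → α} {i : Fin (n + 1)}
    (h : Set.EqOn v w {i + 1}ᶜ) : Set.EqOn (rotateWord v) (rotateWord w) {i}ᶜ :=
  fun _ hj => h fun hj' => hj (add_right_cancel hj')

variable {S : Set (Fin (n + 1) → α)}

theorem exists_perm_init_eq_tail [Finite S] (hrot : ∀ w ∈ S, rotateWord w ∈ S) :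
    ∃ σ : Perm S, (∀ w, Fin.init (σ w).1 = Fin.tail w.1) ∧
      ∀ v w : S, Fin.tail v.1 = Fin.tail w.1 → σ.SameCycle v w := by
  classical
  refine exists_perm_le_sameCycle_of_mul_swap
    ⟨rotateWord.subtypePermOfFintype hrot, fun w => init_rotateWord w.1⟩ ?_
  intro σ e f hσ hef w
  rcases eq_or_ne w e with rfl | hwe
  · rw [mul_apply, swap_apply_left, hσ, hef]
  rcases eq_or_ne w f with rfl | hwf
  · rw [mul_apply, swap_apply_right, hσ, hef]
  · rw [mul_apply, swap_apply_of_ne_of_ne hwe hwf, hσ]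

variable {σ : Perm S}

theorem sameCycle_rotateWord (hrot : ∀ w ∈ S, rotateWord w ∈ S)
    (hσ : ∀ w, Fin.init (σ w).1 = Fin.tail w.1)
    (htail : ∀ v w : S, Fin.tail v.1 = Fin.tail w.1 → σ.SameCycle v w) (w : S) :
    σ.SameCycle w ⟨rotateWord w.1, hrot w.1 w.2⟩ := by
  set r : S := ⟨rotateWord w.1, hrot w.1 w.2⟩
  refine sameCycle_symm_apply_right.1 (htail w (σ.symm r) ?_)
  rw [← hσ (σ.symm r), apply_symm_apply, init_rotateWord]

theorem sameCycle_of_letterChange (hrot : ∀ w ∈ S, rotateWord w ∈ S)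
    (hσ : ∀ w, Fin.init (σ w).1 = Fin.tail w.1)
    (htail : ∀ v w : S, Fin.tail v.1 = Fin.tail w.1 → σ.SameCycle v w)
    {v w : S} (hvw : LetterChange S v w) : σ.SameCycle v w := by
  obtain ⟨j, hj⟩ := hvw
  induction j using Fin.induction generalizing v w with
  | zero => exact htail v w (tail_eq_of_eqOn_compl_zero hj)
  | succ i ih =>
    rw [← Fin.coeSucc_eq_succ] at hj
    have hrotate := sameCycle_rotateWord hrot hσ htail
    have hvw : σ.SameCycle ⟨rotateWord v.1, hrot v.1 v.2⟩ ⟨rotateWord w.1, hrot w.1 w.2⟩ :=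
      ih (eqOn_rotateWord hj)
    exact ((hrotate v).trans hvw).trans (hrotate w).symm

theorem pow_apply_zero_of_init_eq_tail (hσ : ∀ w, Fin.init (σ w).1 = Fin.tail w.1)
    (w : S) (j : Fin (n + 1)) : ((σ ^ (j : ℕ)) w).1 0 = w.1 j := by
  induction j using Fin.induction generalizing w with
  | zero => rfl
  | succ i ih =>
    rw [Fin.val_succ, pow_succ, mul_apply, ← Fin.val_castSucc, ih]
    exact congrFun (hσ w) i

theorem exists_isUCycle_of_sameCycle {k : ℕ} {S : Finset (Fin (n + 1) → Fin k)}
    (hS : S.Nonempty) {σ : Perm (S : Set (Fin (n + 1) → Fin k))}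
    (hσ : ∀ w, Fin.init (σ w).1 = Fin.tail w.1) (hcycle : ∀ v w, σ.SameCycle v w) :
    ∃ s, IsUCycle S s := by
  have : Nonempty (S : Set (Fin (n + 1) → Fin k)) := hS.coe_sort
  have hcard : Nat.card (S : Set (Fin (n + 1) → Fin k)) = S.card := by simp
  obtain ⟨e, he⟩ : ∃ e : ZMod S.card ≃ (S : Set (Fin (n + 1) → Fin k)),
      ∀ i, e (i + 1) = σ (e i) := hcard ▸ exists_zmod_equiv_apply_add_one hcycle
  have he_add (i : ZMod S.card) (t : ℕ) : e (i + t) = (σ ^ t) (e i) := by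
    induction t with
    | zero => simp
    | succ t ih => rw [Nat.cast_succ, ← add_assoc, he, ih, pow_succ', mul_apply]
  have hword : (fun (i : ZMod S.card) (j : Fin (n + 1)) => (e (i + (j : ℕ))).1 0) =
      fun i => (e i).1 := by
    ext1 i
    ext1 j
    rw [he_add, pow_apply_zero_of_init_eq_tail hσ]
  refine ⟨fun i => (e i).1 0, ?_⟩
  rw [IsUCycle, hword]
  refine ⟨fun i _ => (e i).2, (Subtype.val_injective.comp e.injective).injOn, fun w hw => ?_⟩
  exact ⟨e.symm ⟨w, hw⟩, Set.mem_univ _, congrArg Subtype.val (e.apply_symm_apply ⟨w, hw⟩)⟩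

theorem exists_isUCycle_of_letterConnected {k : ℕ} {S : Finset (Fin (n + 1) → Fin k)}
    (hS : S.Nonempty) (hrot : ∀ w ∈ S, rotateWord w ∈ S)
    (hconn : LetterConnected (S : Set (Fin (n + 1) → Fin k))) : ∃ s, IsUCycle S s := by
  obtain ⟨σ, hσ, htail⟩ := exists_perm_init_eq_tail (S := (S : Set (Fin (n + 1) → Fin k))) hrot
  refine exists_isUCycle_of_sameCycle hS hσ fun v w => ?_
  refine (SameCycle.equivalence σ).eqvGen_iff.1 ((hconn v w).mono ?_)
  exact fun _ _ => sameCycle_of_letterChange hrot hσ htail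

end Words

theorem exists_ucycle_non_injective_general (n k : ℕ) (hn : 3 ≤ n) (hk : 1 ≤ k) :
    ∃ s : ZMod (Finset.univ.filter
        (fun w : Fin n → Fin k => ¬ Function.Injective w)).card → Fin k,
      IsUCycle (Finset.univ.filter (fun w : Fin n → Fin k => ¬ Function.Injective w)) s := by
  obtain ⟨m, rfl⟩ := Nat.exists_eq_add_of_le' (show 1 ≤ n by omega)
  refine exists_isUCycle_of_letterConnected ?_ ?_ ?_
  · have h01 : (0 : Fin (m + 1)) ≠ Fin.last m := Fin.ne_of_val_ne (show 0 ≠ m by omega)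
    exact ⟨fun _ => ⟨0, hk⟩,
      (Finset.mem_filter_univ _).2 (mem_nonInjectiveWords_of_apply_eq h01 rfl rfl)⟩
  · intro w hw
    rw [Finset.mem_filter_univ] at hw ⊢
    rwa [injective_rotateWord_iff]
  · rw [Finset.coe_filter_univ]
    exact letterConnected_nonInjectiveWords (by rwa [Fintype.card_fin])

/-- For every `n ≥ 4` and `k ≥ 1` there exists a U-cycle for the set of non-injective
`n`-letter words over a `k`-letter alphabet (words with at least one repeated letter). -/
theorem exists_ucycle_non_injective (n k : ℕ) (hn : 4 ≤ n) (hk : 1 ≤ k) :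
    ∃ s : ZMod (Finset.univ.filter
        (fun w : Fin n → Fin k => ¬ Function.Injective w)).card → Fin k,
      IsUCycle (Finset.univ.filter (fun w : Fin n → Fin k => ¬ Function.Injective w)) s :=
  exists_ucycle_non_injective_general n k (by omega) hk
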